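/- Let N = 2 and let ρ : R² → [0,∞) be a C¹ function with compact support, P = Kρ^γ with K > 0 and γ > 1, and Φ(x) = g∫_{R²} log|x−y| ρ(y) dy with g > 0, satisfying ∇P(x) = −ρ(x)∇Φ(x) for all x. Then the total energy E = ∫ (P/(γ−1) + ½ρΦ) dx of this stationary solution equals gM²/(4(γ−1)) + (g/2)∫∫ ρ(x)ρ(y) log|x−y| dy dx, where M = ∫ ρ(x) dx. -/

import Mathlib

open MeasureTheory Real Filter
open scoped RealInnerProductSpace Topology

noncomputable section

/-- Euclidean space `ℝ^N`. -/
abbrev Euc (N : ℕ) := EuclideanSpace ℝ (Fin N)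

/-- Divergence of a vector field on `ℝ^N`. -/
def ediv {N : ℕ} (v : Euc N → Euc N) (x : Euc N) : ℝ :=
  ∑ i, fderiv ℝ (fun y => v y i) x (EuclideanSpace.single i 1)

/-- Partial derivative of a scalar field in the `i`-th coordinate direction. -/
def epartial {N : ℕ} (i : Fin N) (f : Euc N → ℝ) (x : Euc N) : ℝ :=
  fderiv ℝ f x (EuclideanSpace.single i 1)

/-- Green's function of the Poisson equation in `ℝ^N`:
`log |x|` for `N = 2` and `-|x|^(2-N)` for `N ≥ 3`. -/
def green (N : ℕ) (x : Euc N) : ℝ :=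
  if N = 2 then Real.log ‖x‖ else -(‖x‖ ^ ((2 : ℝ) - (N : ℝ)))

/-- Gravitational potential `Φ(t,x) = g ∫ G(x-y) ρ(t,y) dy`. -/
def potential (N : ℕ) (g : ℝ) (ρ : ℝ → Euc N → ℝ) (t : ℝ) (x : Euc N) : ℝ :=
  g * ∫ y, green N (x - y) * ρ t y

/-- A classical solution on `[0,T)` (with `T : EReal`, so `T = ⊤` means a global
solution) of the `N`-dimensional Euler–Poisson equations with pressure
`P = K ρ^γ`, damping constant `β` and gravitational constant `g`:
nonnegative `C¹` density `ρ`, `C¹` velocity `u`, with `ρ(t,·)` supported in a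
fixed bounded open set `Ω`, satisfying the continuity and momentum equations
pointwise. -/
structure IsEPSolution (N : ℕ) (K γ β g : ℝ) (Ω : Set (Euc N)) (T : EReal)
    (ρ : ℝ → Euc N → ℝ) (u : ℝ → Euc N → Euc N) : Prop where
  rho_nonneg : ∀ t x, 0 ≤ ρ t x
  rho_C1 : ContDiff ℝ 1 (fun p : ℝ × Euc N => ρ p.1 p.2)
  u_C1 : ContDiff ℝ 1 (fun p : ℝ × Euc N => u p.1 p.2)
  omega_open : IsOpen Ω
  omega_bounded : Bornology.IsBounded Ω
  support_subset : ∀ t : ℝ, 0 ≤ t → (t : EReal) < T → Function.support (ρ t) ⊆ Ω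
  continuity_eq : ∀ t : ℝ, 0 ≤ t → (t : EReal) < T → ∀ x : Euc N,
    deriv (fun s => ρ s x) t + ediv (fun y => ρ t y • u t y) x = 0
  momentum_eq : ∀ t : ℝ, 0 ≤ t → (t : EReal) < T → ∀ x : Euc N, ∀ j : Fin N,
    deriv (fun s => ρ s x * u s x j) t
      + (∑ i, epartial i (fun y => ρ t y * u t y i * u t y j) x)
      + epartial j (fun y => K * ρ t y ^ γ) x
      = -(ρ t x * epartial j (potential N g ρ t) x) - β * ρ t x * u t x j

/-- Total energy (case `γ > 1`):
`E(t) = ∫_Ω (½ ρ|u|² + P/(γ-1) + ½ ρΦ) dx` with `P = K ρ^γ`. -/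
def energy (N : ℕ) (K γ g : ℝ) (Ω : Set (Euc N)) (ρ : ℝ → Euc N → ℝ)
    (u : ℝ → Euc N → Euc N) (t : ℝ) : ℝ :=
  ∫ x in Ω, ((1 / 2) * ρ t x * ‖u t x‖ ^ 2 + K * ρ t x ^ γ / (γ - 1)
    + (1 / 2) * ρ t x * potential N g ρ t x)

/-- Isothermal total energy (case `γ = 1`, `P = Kρ`):
`E(t) = ∫_Ω (½ ρ|u|² + Kρ log ρ + ½ ρΦ) dx` (note `ρ log ρ = 0` where `ρ = 0`
since `Real.log 0 = 0`). -/
def energyIso (N : ℕ) (K g : ℝ) (Ω : Set (Euc N)) (ρ : ℝ → Euc N → ℝ)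
    (u : ℝ → Euc N → Euc N) (t : ℝ) : ℝ :=
  ∫ x in Ω, ((1 / 2) * ρ t x * ‖u t x‖ ^ 2 + K * ρ t x * Real.log (ρ t x)
    + (1 / 2) * ρ t x * potential N g ρ t x)

/-- Second inertia function `H(t) = ∫_Ω ρ(t,x)|x|² dx`. -/
def inertia (N : ℕ) (Ω : Set (Euc N)) (ρ : ℝ → Euc N → ℝ) (t : ℝ) : ℝ :=
  ∫ x in Ω, ρ t x * ‖x‖ ^ 2

/-- Maximal radius of the support of `ρ(t,·)`. -/
def maxRadius (N : ℕ) (ρ : ℝ → Euc N → ℝ) (t : ℝ) : ℝ :=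
  sSup ((fun x : Euc N => ‖x‖) '' Function.support (ρ t))

/-!
Apply the dilations `x ↦ l • x` to `ρ ⊗ ρ` on the product space and differentiate at `l = 1`. The
logarithm turns a dilation into an additive constant, so the interaction energy `∫∫ ρ ρ log |x - y|`
picks up a term proportional to `M ^ 2`, which comes out as `∫ ρ (x · ∇φ) = M ^ 2 / 2` for
`φ = log |·| ⋆ ρ`. Pairing the hydrostatic equation with `x` and integrating by parts, again by
dilation, yields the virial identity `d ∫ P = g M ^ 2 / 2` in dimension `d`, and this evaluates the
internal energy. Dilating avoids any formula for `∇φ` with its singular kernel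
`(x - y) / |x - y| ^ 2`.
-/

open Module

section RadialDerivative

variable {E : Type*} [NormedAddCommGroup E] [NormedSpace ℝ E] {f h : E → ℝ}

/-- The Euler operator `x · ∇f`, the generator of dilations. It is written with `fderiv` and so
needs no inner product. -/
def radialDeriv (f : E → ℝ) (x : E) : ℝ :=
  fderiv ℝ f x x

lemma continuous_radialDeriv (hf : ContDiff ℝ 1 f) : Continuous (radialDeriv f) :=
  (hf.continuous_fderiv one_ne_zero).clm_apply continuous_id

lemma hasCompactSupport_radialDeriv (hs : HasCompactSupport f) :
    HasCompactSupport (radialDeriv f) :=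
  (hs.fderiv ℝ).mono fun x hx hzero ↦ hx (by simp [radialDeriv, hzero])

lemma hasDerivAt_comp_smul (hf : Differentiable ℝ f) (z : E) {l : ℝ} (hl : l ≠ 0) :
    HasDerivAt (fun l : ℝ ↦ f (l • z)) (l⁻¹ * radialDeriv f (l • z)) l := by
  have hray : HasDerivAt (fun l : ℝ ↦ l • z) z l := by
    simpa using (hasDerivAt_id l).smul_const z
  have hchain : HasDerivAt (fun l : ℝ ↦ f (l • z)) (fderiv ℝ f (l • z) z) l :=
    (hf (l • z)).hasFDerivAt.comp_hasDerivAt l hray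
  simpa [radialDeriv, hl] using hchain

lemma radialDeriv_mul (hf : Differentiable ℝ f) (hh : Differentiable ℝ h) (x : E) :
    radialDeriv (fun y ↦ f y * h y) x = radialDeriv f x * h x + f x * radialDeriv h x := by
  have hmul : fderiv ℝ (fun y ↦ f y * h y) x = _ := fderiv_mul (hf x) (hh x)
  simp only [radialDeriv, hmul, add_apply, smul_apply, smul_eq_mul]
  ring

lemma radialDeriv_const_mul (c : ℝ) (f : E → ℝ) (x : E) :
    radialDeriv (fun y ↦ c * f y) x = c * radialDeriv f x := by
  have hsmul : fderiv ℝ (fun y ↦ c * f y) = c • fderiv ℝ f := fderiv_const_smul_field c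
  simp [radialDeriv, hsmul]

lemma radialDeriv_fst_mul_snd (hf : Differentiable ℝ f) (hh : Differentiable ℝ h) (p : E × E) :
    radialDeriv (fun q : E × E ↦ f q.1 * h q.2) p
      = radialDeriv f p.1 * h p.2 + f p.1 * radialDeriv h p.2 := by
  have hfst := (hf p.1).hasFDerivAt.comp p hasFDerivAt_fst
  have hsnd := (hh p.2).hasFDerivAt.comp p hasFDerivAt_snd
  have hmul : fderiv ℝ (fun q : E × E ↦ f q.1 * h q.2) p = _ := (hfst.mul hsnd).fderiv
  simp only [radialDeriv, hmul, Function.comp_apply, add_apply, smul_apply, smul_eq_mul,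
    ContinuousLinearMap.comp_apply, ContinuousLinearMap.coe_fst', ContinuousLinearMap.coe_snd']
  ring

end RadialDerivative

lemma radialDeriv_eq_inner_gradient {E : Type*} [NormedAddCommGroup E] [InnerProductSpace ℝ E]
    [CompleteSpace E] (f : E → ℝ) (x : E) : radialDeriv f x = inner ℝ (gradient f x) x := by
  simp [radialDeriv, gradient]

lemma hasCompactSupport_fst_mul_snd {X Y : Type*} [TopologicalSpace X] [TopologicalSpace Y]
    [R1Space X] [R1Space Y] {a : X → ℝ} {b : Y → ℝ} (ha : HasCompactSupport a)
    (hb : HasCompactSupport b) : HasCompactSupport fun p : X × Y ↦ a p.1 * b p.2 := by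
  refine HasCompactSupport.intro (ha.isCompact.prod hb.isCompact) fun p hp ↦ ?_
  by_contra hne
  exact hp ⟨subset_tsupport a (left_ne_zero_of_mul hne),
    subset_tsupport b (right_ne_zero_of_mul hne)⟩

lemma integrable_mul_of_locallyIntegrable {X : Type*} [TopologicalSpace X] [T2Space X]
    [MeasurableSpace X] [OpensMeasurableSpace X] {μ : Measure X} {w f : X → ℝ}
    (hw : LocallyIntegrable w μ) (hf : Continuous f) (hs : HasCompactSupport f) :
    Integrable (fun z ↦ w z * f z) μ :=
  hw.integrable_smul_right_of_hasCompactSupport hf hs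

section HaarMeasure

variable {E : Type*} [NormedAddCommGroup E] [NormedSpace ℝ E] [FiniteDimensional ℝ E]
  [MeasurableSpace E] [BorelSpace E]

section Dilation

variable {μ : Measure E} {w f : E → ℝ}

lemma hasDerivAt_integral_mul_comp_smul (hw : LocallyIntegrable w μ) (hf : ContDiff ℝ 1 f)
    (hs : HasCompactSupport f) :
    HasDerivAt (fun l : ℝ ↦ ∫ z, w z * f (l • z) ∂μ) (∫ z, w z * radialDeriv f z ∂μ) 1 := by
  have hc := continuous_radialDeriv hf
  obtain ⟨C, hC⟩ := (hasCompactSupport_radialDeriv hs).exists_bound_of_continuous hc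
  obtain ⟨R, hR⟩ := (hasCompactSupport_radialDeriv hs).isCompact.isBounded.subset_closedBall 0
  let B := Metric.closedBall (0 : E) (2 * R)
  have hbound (z : E) (l : ℝ) (hl : 1 / 2 < l) :
      ‖w z * (l⁻¹ * radialDeriv f (l • z))‖ ≤ B.indicator (fun z ↦ ‖w z‖ * (2 * C)) z := by
    by_cases hzero : radialDeriv f (l • z) = 0
    · have hC0 : 0 ≤ C := (norm_nonneg _).trans (hC 0)
      simpa [hzero] using Set.indicator_nonneg (fun _ _ ↦ by positivity) z
    have hlz : l * ‖z‖ ≤ R := by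
      simpa [norm_smul, abs_of_pos (by linarith : 0 < l)] using hR (subset_tsupport _ hzero)
    have hz : z ∈ B := mem_closedBall_zero_iff.2 (by nlinarith [norm_nonneg z])
    have hinv : ‖l⁻¹‖ ≤ 2 := by
      rw [norm_inv, Real.norm_of_nonneg (by linarith)]
      exact inv_le_of_inv_le₀ (by norm_num) (by linarith)
    rw [Set.indicator_of_mem hz, norm_mul, norm_mul]
    gcongr
    exact hC _
  have hderiv := hasDerivAt_integral_of_dominated_loc_of_deriv_le (μ := μ)
    (F := fun l z ↦ w z * f (l • z)) (F' := fun l z ↦ w z * (l⁻¹ * radialDeriv f (l • z)))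
    (x₀ := (1 : ℝ)) (Ioi_mem_nhds (by norm_num : (1 / 2 : ℝ) < 1))
    (.of_forall fun l ↦ hw.aestronglyMeasurable.mul
      (hf.continuous.comp (continuous_const_smul l)).aestronglyMeasurable)
    (by simpa using integrable_mul_of_locallyIntegrable hw hf.continuous hs)
    (by simpa [Pi.mul_def] using hw.aestronglyMeasurable.mul hc.aestronglyMeasurable)
    (.of_forall fun z l hl ↦ hbound z l hl)
    ((integrable_indicator_iff measurableSet_closedBall).2
      ((hw.integrableOn_isCompact (isCompact_closedBall _ _)).norm.mul_const _))
    (.of_forall fun z l hl ↦ (hasDerivAt_comp_smul (hf.differentiable one_ne_zero) z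
      (by rw [Set.mem_Ioi] at hl; linarith)).const_mul (w z))
  simpa using hderiv.2

variable [μ.IsAddHaarMeasure]

lemma integral_mul_comp_smul_of_log_homogeneous {c l : ℝ} (hl : 0 < l)
    (hw : LocallyIntegrable w μ) (hhom : ∀ᵐ z ∂μ, w (l • z) = w z + c * Real.log l)
    (hf : Continuous f) (hs : HasCompactSupport f) :
    ∫ z, w z * f (l • z) ∂μ
      = (l ^ finrank ℝ E)⁻¹ * (∫ z, w z * f z ∂μ - c * Real.log l * ∫ z, f z ∂μ) := by
  calc
    ∫ z, w z * f (l • z) ∂μ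
        = ∫ z, (w (l • z) * f (l • z) - c * Real.log l * f (l • z)) ∂μ := by
      refine integral_congr_ae (hhom.mono fun z hz ↦ ?_)
      simp only [hz]
      ring
    _ = (l ^ finrank ℝ E)⁻¹ * ∫ z, (w z * f z - c * Real.log l * f z) ∂μ :=
      Measure.integral_comp_smul_of_nonneg μ
        (fun z ↦ w z * f z - c * Real.log l * f z) l (hR := hl.le)
    _ = _ := by
      rw [integral_sub (integrable_mul_of_locallyIntegrable hw hf hs)
        ((hf.integrable_of_hasCompactSupport hs).const_mul _), integral_const_mul]

lemma integral_mul_radialDeriv_of_log_homogeneous {c : ℝ} (hw : LocallyIntegrable w μ)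
    (hhom : ∀ l : ℝ, 0 < l → ∀ᵐ z ∂μ, w (l • z) = w z + c * Real.log l)
    (hf : ContDiff ℝ 1 f) (hs : HasCompactSupport f) :
    ∫ z, w z * radialDeriv f z ∂μ
      = -(finrank ℝ E * ∫ z, w z * f z ∂μ) - c * ∫ z, f z ∂μ := by
  have hscaled : HasDerivAt (fun l : ℝ ↦ (l ^ finrank ℝ E)⁻¹ *
      (∫ z, w z * f z ∂μ - c * Real.log l * ∫ z, f z ∂μ))
      (-(finrank ℝ E * ∫ z, w z * f z ∂μ) - c * ∫ z, f z ∂μ) 1 := by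
    have hpow := (hasDerivAt_pow (finrank ℝ E) (1 : ℝ)).fun_inv (by simp)
    have hlog := (((Real.hasDerivAt_log one_ne_zero).const_mul c).mul_const
      (∫ z, f z ∂μ)).const_sub (∫ z, w z * f z ∂μ)
    simpa [sub_eq_add_neg] using hpow.fun_mul hlog
  refine (hasDerivAt_integral_mul_comp_smul hw hf hs).unique (hscaled.congr_of_eventuallyEq ?_)
  filter_upwards [Ioi_mem_nhds one_pos] with l hl
  exact integral_mul_comp_smul_of_log_homogeneous hl hw (hhom l hl) hf.continuous hs

lemma integral_radialDeriv (hf : ContDiff ℝ 1 f) (hs : HasCompactSupport f) :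
    ∫ x, radialDeriv f x ∂μ = -(finrank ℝ E * ∫ x, f x ∂μ) := by
  simpa using integral_mul_radialDeriv_of_log_homogeneous (w := fun _ ↦ 1) (c := 0)
    (locallyIntegrable_const 1) (by simp) hf hs

end Dilation

section LogPotential

/-- The logarithmic potential `log |·| ⋆ ρ` of the density `ρ`, without the coupling constant. -/
def logPotential (μ : Measure E) (ρ : E → ℝ) (x : E) : ℝ :=
  ∫ y, Real.log ‖x - y‖ * ρ y ∂μ

variable {μ : Measure E} [μ.IsAddHaarMeasure]

lemma locallyIntegrable_comp_sub {w : E → ℝ} (hw : LocallyIntegrable w μ) :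
    LocallyIntegrable (fun p : E × E ↦ w (p.1 - p.2)) (μ.prod μ) := by
  refine locallyIntegrable_iff.2 fun k hk ↦ ?_
  have hdiff : IsCompact ((fun p : E × E ↦ p.1 - p.2) '' k) := hk.image continuous_sub
  have hsnd : IsCompact (Prod.snd '' k) := hk.image continuous_snd
  have hcutoff := ((integrable_indicator_iff hsnd.measurableSet).2
      (integrableOn_const (μ := μ) (C := (1 : ℝ)) hsnd.measure_ne_top)).convolution_integrand
    (ContinuousLinearMap.mul ℝ ℝ) ((integrable_indicator_iff hdiff.measurableSet).2
      (hw.integrableOn_isCompact hdiff))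
  refine hcutoff.integrableOn.congr_fun (fun p hp ↦ ?_) hk.measurableSet
  simp [Set.indicator_of_mem (Set.mem_image_of_mem Prod.snd hp),
    Set.indicator_of_mem (Set.mem_image_of_mem (fun p : E × E ↦ p.1 - p.2) hp)]

lemma ae_fst_ne_snd [Nontrivial E] : ∀ᵐ p : E × E ∂μ.prod μ, p.1 ≠ p.2 :=
  ((quasiMeasurePreserving_sub_of_right_invariant μ μ).ae (Measure.ae_ne μ 0)).mono
    fun _ hp ↦ sub_ne_zero.1 hp

variable [Nontrivial E] {ρ a b : E → ℝ}

lemma locallyIntegrable_log_norm : LocallyIntegrable (fun z : E ↦ Real.log ‖z‖) μ := by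
  intro x
  have hlog : IntegrableOn Real.log (Set.Icc 0 (‖x‖ + 1)) := by
    rw [integrableOn_Icc_iff_integrableOn_Ioc,
      ← intervalIntegrable_iff_integrableOn_Ioc_of_le (by positivity)]
    exact intervalIntegral.intervalIntegrable_log'
  have hpolar : IntegrableOn (fun r ↦ r ^ (finrank ℝ E - 1) • Real.log r)
      (Set.Icc 0 (‖x‖ + 1)) :=
    hlog.continuousOn_mul (by fun_prop) isCompact_Icc
  exact ⟨Metric.ball 0 (‖x‖ + 1), Metric.isOpen_ball.mem_nhds (by simp),
    (integrableOn_fun_norm_addHaar μ).2 (hpolar.mono_set Set.Ioo_subset_Icc_self)⟩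

lemma contDiff_logPotential (hρ : ContDiff ℝ 1 ρ) (hs : HasCompactSupport ρ) :
    ContDiff ℝ 1 (logPotential μ ρ) := by
  have hconv : logPotential μ ρ = convolution (fun z : E ↦ Real.log ‖z‖) ρ
      (ContinuousLinearMap.mul ℝ ℝ) μ := by
    ext x
    rw [convolution_eq_swap]
    rfl
  rw [hconv]
  exact_mod_cast hs.contDiff_convolution_right (n := 1) _ locallyIntegrable_log_norm
    (by exact_mod_cast hρ)

lemma integrable_log_norm_sub_mul (ha : Continuous a) (has : HasCompactSupport a)
    (hb : Continuous b) (hbs : HasCompactSupport b) :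
    Integrable (fun p : E × E ↦ Real.log ‖p.1 - p.2‖ * (a p.1 * b p.2)) (μ.prod μ) :=
  integrable_mul_of_locallyIntegrable (locallyIntegrable_comp_sub locallyIntegrable_log_norm)
    (by fun_prop) (hasCompactSupport_fst_mul_snd has hbs)

lemma integral_mul_logPotential (ha : Continuous a) (has : HasCompactSupport a)
    (hb : Continuous b) (hbs : HasCompactSupport b) :
    ∫ x, a x * logPotential μ b x ∂μ
      = ∫ p : E × E, Real.log ‖p.1 - p.2‖ * (a p.1 * b p.2) ∂μ.prod μ := by
  rw [integral_prod _ (integrable_log_norm_sub_mul ha has hb hbs)]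
  simp only [logPotential, ← integral_const_mul, mul_left_comm]

lemma integral_mul_logPotential_comm (ha : Continuous a) (has : HasCompactSupport a)
    (hb : Continuous b) (hbs : HasCompactSupport b) :
    ∫ x, a x * logPotential μ b x ∂μ = ∫ x, b x * logPotential μ a x ∂μ := by
  rw [integral_mul_logPotential ha has hb hbs, integral_mul_logPotential hb hbs ha has,
    ← integral_prod_swap]
  simp only [Prod.fst_swap, Prod.snd_swap, norm_sub_rev, mul_comm]

lemma integral_radialDeriv_mul_logPotential (hρ : ContDiff ℝ 1 ρ) (hs : HasCompactSupport ρ) :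
    ∫ x, radialDeriv ρ x * logPotential μ ρ x ∂μ
      = -(finrank ℝ E * ∫ x, ρ x * logPotential μ ρ x ∂μ) - (∫ x, ρ x ∂μ) ^ 2 / 2 := by
  have hq := continuous_radialDeriv hρ
  have hqs := hasCompactSupport_radialDeriv hs
  have hd := hρ.differentiable one_ne_zero
  have hhom (l : ℝ) (hl : 0 < l) : ∀ᵐ p : E × E ∂μ.prod μ,
      Real.log ‖(l • p).1 - (l • p).2‖ = Real.log ‖p.1 - p.2‖ + 1 * Real.log l := by
    filter_upwards [ae_fst_ne_snd] with p hp
    rw [Prod.smul_fst, Prod.smul_snd, ← smul_sub, norm_smul, Real.norm_of_nonneg hl.le,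
      Real.log_mul hl.ne' (norm_sub_eq_zero_iff.not.2 hp)]
    ring
  have hscale := integral_mul_radialDeriv_of_log_homogeneous
    (locallyIntegrable_comp_sub locallyIntegrable_log_norm) hhom
    (f := fun p : E × E ↦ ρ p.1 * ρ p.2)
    ((hρ.comp contDiff_fst).mul (hρ.comp contDiff_snd)) (hasCompactSupport_fst_mul_snd hs hs)
  have hproduct : ∫ p : E × E, Real.log ‖p.1 - p.2‖ *
        radialDeriv (fun p : E × E ↦ ρ p.1 * ρ p.2) p ∂μ.prod μ
      = 2 * ∫ x, radialDeriv ρ x * logPotential μ ρ x ∂μ := by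
    simp only [radialDeriv_fst_mul_snd hd hd, mul_add]
    rw [integral_add (integrable_log_norm_sub_mul hq hqs hρ.continuous hs)
        (integrable_log_norm_sub_mul hρ.continuous hs hq hqs),
      ← integral_mul_logPotential hq hqs hρ.continuous hs,
      ← integral_mul_logPotential hρ.continuous hs hq hqs,
      integral_mul_logPotential_comm hρ.continuous hs hq hqs]
    ring
  rw [hproduct, ← integral_mul_logPotential hρ.continuous hs hρ.continuous hs,
    integral_prod_mul, finrank_prod] at hscale
  push_cast at hscale
  linarith

lemma integral_mul_radialDeriv_logPotential (hρ : ContDiff ℝ 1 ρ) (hs : HasCompactSupport ρ) :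
    ∫ x, ρ x * radialDeriv (logPotential μ ρ) x ∂μ = (∫ x, ρ x ∂μ) ^ 2 / 2 := by
  have hφ := contDiff_logPotential (μ := μ) hρ hs
  have hparts := integral_radialDeriv (μ := μ) (hρ.mul hφ) hs.mul_right
  have hleft : Integrable (fun x ↦ radialDeriv ρ x * logPotential μ ρ x) μ :=
    ((continuous_radialDeriv hρ).mul hφ.continuous).integrable_of_hasCompactSupport
      (hasCompactSupport_radialDeriv hs).mul_right
  have hright : Integrable (fun x ↦ ρ x * radialDeriv (logPotential μ ρ) x) μ :=
    (hρ.continuous.mul (continuous_radialDeriv hφ)).integrable_of_hasCompactSupport hs.mul_right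
  simp only [radialDeriv_mul (hρ.differentiable one_ne_zero) (hφ.differentiable one_ne_zero)]
    at hparts
  rw [integral_add hleft hright, integral_radialDeriv_mul_logPotential hρ hs] at hparts
  linarith

lemma integral_pressure_of_hydrostatic {g : ℝ} {P : E → ℝ} (hρ : ContDiff ℝ 1 ρ)
    (hs : HasCompactSupport ρ) (hP : ContDiff ℝ 1 P) (hPs : HasCompactSupport P)
    (hhyd : ∀ x, radialDeriv P x = -ρ x * (g * radialDeriv (logPotential μ ρ) x)) :
    ∫ x, P x ∂μ = g * (∫ x, ρ x ∂μ) ^ 2 / (2 * finrank ℝ E) := by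
  have hvirial := calc
    -(finrank ℝ E * ∫ x, P x ∂μ) = ∫ x, radialDeriv P x ∂μ := (integral_radialDeriv hP hPs).symm
    _ = -g * ∫ x, ρ x * radialDeriv (logPotential μ ρ) x ∂μ := by
      rw [← integral_const_mul]
      exact integral_congr_ae (.of_forall fun x ↦ by rw [hhyd]; ring)
    _ = -g * ((∫ x, ρ x ∂μ) ^ 2 / 2) := by rw [integral_mul_radialDeriv_logPotential hρ hs]
  have hdim : (finrank ℝ E : ℝ) ≠ 0 := mod_cast finrank_pos.ne'
  field_simp
  linarith

end LogPotential

end HaarMeasure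

theorem stationary_energy_2d_general {E : Type*} [NormedAddCommGroup E] [InnerProductSpace ℝ E]
    [FiniteDimensional ℝ E] [Nontrivial E] [MeasurableSpace E] [BorelSpace E]
    (μ : Measure E) [μ.IsAddHaarMeasure] {γ g : ℝ} (hγ : γ ≠ 1)
    {ρ P Φ : E → ℝ} (hρ : ContDiff ℝ 1 ρ) (hs : HasCompactSupport ρ)
    (hP : ContDiff ℝ 1 P) (hPs : HasCompactSupport P)
    (hΦ : ∀ x, Φ x = g * ∫ y, Real.log ‖x - y‖ * ρ y ∂μ)
    (hhyd : ∀ x, gradient P x = -(ρ x) • gradient Φ x) :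
    ∫ x, (P x / (γ - 1) + (1 / 2) * ρ x * Φ x) ∂μ
      = g * (∫ x, ρ x ∂μ) ^ 2 / (2 * finrank ℝ E * (γ - 1))
        + (g / 2) * ∫ x, ρ x * ∫ y, ρ y * Real.log ‖x - y‖ ∂μ ∂μ := by
  obtain rfl : Φ = fun x ↦ g * logPotential μ ρ x := funext hΦ
  have hradial (x : E) : radialDeriv P x = -ρ x * (g * radialDeriv (logPotential μ ρ) x) := by
    rw [← radialDeriv_const_mul, radialDeriv_eq_inner_gradient, radialDeriv_eq_inner_gradient,
      hhyd, real_inner_smul_left]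
  have hgravity : Integrable (fun x ↦ ρ x * logPotential μ ρ x) μ :=
    (hρ.continuous.mul (contDiff_logPotential hρ hs).continuous).integrable_of_hasCompactSupport
      hs.mul_right
  calc
    _ = ∫ x, (P x / (γ - 1) + (g / 2) * (ρ x * logPotential μ ρ x)) ∂μ := by
      congr with x
      ring
    _ = (∫ x, P x ∂μ) / (γ - 1) + (g / 2) * ∫ x, ρ x * logPotential μ ρ x ∂μ := by
      rw [integral_add ((hP.continuous.integrable_of_hasCompactSupport hPs).div_const _)
        (hgravity.const_mul _), integral_div, integral_const_mul]
    _ = g * (∫ x, ρ x ∂μ) ^ 2 / (2 * finrank ℝ E * (γ - 1))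
        + (g / 2) * ∫ x, ρ x * logPotential μ ρ x ∂μ := by
      have hγ' : γ - 1 ≠ 0 := sub_ne_zero.2 hγ
      rw [integral_pressure_of_hydrostatic hρ hs hP hPs hradial]
      field_simp
    _ = _ := by simp only [logPotential, mul_comm]

/-- For a 2-D hydrostatic equilibrium, the stationary total energy
`E = ∫ (P/(γ-1) + ½ρΦ) dx` equals
`gM²/(4(γ-1)) + (g/2)∫∫ ρ(x)ρ(y) log|x-y| dy dx`. -/
theorem stationary_energy_2d (K γ g : ℝ) (hK : 0 < K) (hγ : 1 < γ) (hg : 0 < g)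
    (ρ : Euc 2 → ℝ) (hρ : ContDiff ℝ 1 ρ) (hsupp : HasCompactSupport ρ)
    (hnn : ∀ x, 0 ≤ ρ x)
    (Φ : Euc 2 → ℝ) (hΦ : ∀ x, Φ x = g * ∫ y, Real.log ‖x - y‖ * ρ y)
    (hhyd : ∀ x, gradient (fun z => K * ρ z ^ γ) x = -(ρ x) • gradient Φ x) :
    ∫ x, (K * ρ x ^ γ / (γ - 1) + (1 / 2) * ρ x * Φ x)
      = g * (∫ x, ρ x) ^ 2 / (4 * (γ - 1))
        + (g / 2) * ∫ x, ρ x * ∫ y, ρ y * Real.log ‖x - y‖ := by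
  have hP : ContDiff ℝ 1 fun z ↦ K * ρ z ^ γ :=
    contDiff_const.mul (hρ.rpow_const_of_le (by exact_mod_cast hγ.le))
  have hPs : HasCompactSupport fun z ↦ K * ρ z ^ γ :=
    hsupp.comp_left (g := fun r ↦ K * r ^ γ) (by simp [Real.zero_rpow (by linarith : γ ≠ 0)])
  convert stationary_energy_2d_general volume hγ.ne' hρ hsupp hP hPs hΦ hhyd using 3
  norm_num
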